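/- arXiv:2306.12081 — 8 statements merged into one kernel-verified Lean document; each statement's English description precedes it below -/
import Mathlib

section
/- Let $n > m > 2$ be integers, let $L(n,m) = \binom{n-2}{m-2}$ and $d = \lfloor (n-1)/2 \rfloor$. For $1 \le i \le d$ define the integers $a_i(n,m) = (4i-1)\binom{n-2}{m-2} - 2i\binom{2i}{m-1} + 2i\binom{2i-2}{m-1} + \binom{2i-2}{m-2}$ and $b_i(n,m) = -2\binom{n-2}{m-2} + \binom{2i}{m-1} - \binom{2i-2}{m-1}$. Then for every binary vector $\mathbf{x} = (x_1,\dots,x_n) \in \{0,1\}^n$, $P_n^{(m)}(\mathbf{x}) = L(n,m)\sum_{1 \le i < j \le n} x_i x_j + \min_{\mathbf{w} \in \{0,1\}^d} \sum_{i=1}^{d} w_i\left(a_i(n,m) + b_i(n,m)\sum_{j=1}^{n} x_j\right)$, where the minimum is taken over all $\mathbf{w} = (w_1,\dots,w_d) \in \{0,1\}^d$ and all arithmetic is in $\mathbb{Z}$. -/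
/-- The symmetric `m`-polynomial (elementary symmetric polynomial of degree `m`)
on `n` binary variables. -/
def symmPoly (n m : ℕ) (x : Fin n → ℤ) : ℤ :=
  ∑ S ∈ Finset.powersetCard m (Finset.univ : Finset (Fin n)), ∏ i ∈ S, x i

/-- The coefficient `a_i(n,m)` from Theorem 1. -/
def aCoef (n m i : ℕ) : ℤ :=
  (4 * (i : ℤ) - 1) * ((n - 2).choose (m - 2) : ℤ)
    - 2 * (i : ℤ) * ((2 * i).choose (m - 1) : ℤ)
    + 2 * (i : ℤ) * ((2 * i - 2).choose (m - 1) : ℤ)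
    + ((2 * i - 2).choose (m - 2) : ℤ)

/-- The coefficient `b_i(n,m)` from Theorem 1. -/
def bCoef (n m i : ℕ) : ℤ :=
  -2 * ((n - 2).choose (m - 2) : ℤ) + ((2 * i).choose (m - 1) : ℤ)
    - ((2 * i - 2).choose (m - 1) : ℤ)

/-!
On a binary vector with `k` ones, `P_n^{(m)}` equals `C(k, m)` and the quadratic form equals
`C(k, 2)`, so everything depends on the sequence `f k = C(k, m) - L * C(k, 2)`. Its second
differences `C(k, m - 2) - C(n - 2, m - 2)` are nonpositive up to `k = n - 2`, where they vanish:
`f` is concave, and hence the lower envelope of its chords through the points `2q` and `2q + 1`.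
The coefficient of `w_i` is exactly the `i`-th chord minus the `(i - 1)`-st, so choosing `w` to pick
up the negative coefficients telescopes to the chord through `k`.
-/

open Finset
open scoped fwdDiff

section BinaryVectors

variable {ι R : Type*} [CommSemiring R] [DecidableEq R] {s : Finset ι} {x : ι → R}

lemma sum_eq_card_of_binary (hx : ∀ i ∈ s, x i = 0 ∨ x i = 1) :
    ∑ i ∈ s, x i = #{i ∈ s | x i = 1} := by
  rw [← sum_boole]
  exact sum_congr rfl fun i hi ↦ by rcases hx i hi with h | h <;> simp +contextual [h]

lemma prod_eq_ite_of_binary (hx : ∀ i ∈ s, x i = 0 ∨ x i = 1) :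
    ∏ i ∈ s, x i = if ∀ i ∈ s, x i = 1 then 1 else 0 := by
  split_ifs with hone
  · exact prod_eq_one hone
  · push Not at hone
    obtain ⟨i, hi, hi1⟩ := hone
    exact prod_eq_zero hi ((hx i hi).resolve_right hi1)

lemma sum_powersetCard_prod_eq_choose_of_binary (m : ℕ) (hx : ∀ i ∈ s, x i = 0 ∨ x i = 1) :
    ∑ t ∈ s.powersetCard m, ∏ i ∈ t, x i = ((#{i ∈ s | x i = 1}).choose m : R) := by
  have prod_eq (t) (ht : t ∈ s.powersetCard m) :
      ∏ i ∈ t, x i = if ∀ i ∈ t, x i = 1 then 1 else 0 :=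
    prod_eq_ite_of_binary fun i hi ↦ hx i ((mem_powersetCard.1 ht).1 hi)
  rw [sum_congr rfl prod_eq, sum_boole, ← card_powersetCard]
  congr 2
  grind

lemma sum_mul_lt_eq_choose_two_of_binary [LinearOrder ι] (hx : ∀ i ∈ s, x i = 0 ∨ x i = 1) :
    ∑ p ∈ s ×ˢ s with p.1 < p.2, x p.1 * x p.2 = ((#{i ∈ s | x i = 1}).choose 2 : R) := by
  have mul_eq (p) (hp : p ∈ (s ×ˢ s).filter fun p ↦ p.1 < p.2) :
      x p.1 * x p.2 = if x p.1 = 1 ∧ x p.2 = 1 then 1 else 0 := by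
    have hp' := mem_product.1 (mem_filter.1 hp).1
    rcases hx _ hp'.1 with h₁ | h₁ <;> rcases hx _ hp'.2 with h₂ | h₂ <;>
      simp +contextual [h₁, h₂]
  rw [sum_congr rfl mul_eq, sum_boole, ← card_product_filter_lt]
  congr 2
  grind

end BinaryVectors

lemma inf'_univ_sum_ite_mul_eq_sum_min {ι R : Type*} [Fintype ι] [DecidableEq ι]
    [Semiring R] [LinearOrder R] [IsOrderedAddMonoid R] (c : ι → R) :
    univ.inf' univ_nonempty (fun w : ι → Bool ↦ ∑ i, (if w i then 1 else 0) * c i)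
      = ∑ i, min (c i) 0 := by
  apply le_antisymm
  · refine (inf'_le _ (mem_univ fun i ↦ decide (c i ≤ 0))).trans_eq (sum_congr rfl fun i _ ↦ ?_)
    rcases le_total (c i) 0 with h | h <;> grind
  · refine le_inf' _ _ fun w _ ↦ sum_le_sum fun i _ ↦ ?_
    cases w i <;> simp

section EvenChord

/-- The chord of the sequence `f` through its values at `2 * q` and `2 * q + 1`, as an affine
function of `t`. -/
def evenChord {R : Type*} [Ring R] (f : ℕ → R) (q : ℕ) (t : R) : R :=
  f (2 * q) + (t - 2 * q) * Δ_[1] f (2 * q)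

section Ring

variable {R : Type*} [CommRing R] (f : ℕ → R) (q : ℕ)

lemma evenChord_succ_sub_evenChord (t : R) :
    evenChord f (q + 1) t - evenChord f q t
      = (t - (2 * q + 1)) * (Δ_[1] f (2 * q + 1) - Δ_[1] f (2 * q))
        + (t - (2 * q + 2)) * (Δ_[1] f (2 * q + 2) - Δ_[1] f (2 * q + 1)) := by
  simp only [evenChord, fwdDiff, mul_add_one]
  push_cast
  ring

lemma evenChord_half (k : ℕ) : evenChord f (k / 2) (k : R) = f k := by
  obtain ⟨q, rfl | rfl⟩ := k.even_or_odd'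
  · simp [evenChord]
  · simp [evenChord, fwdDiff, Nat.mul_add_div]

variable {f q} in
lemma evenChord_two_mul_add_two (h : Δ_[1] f (2 * q + 1) = Δ_[1] f (2 * q)) :
    evenChord f q (2 * q + 2) = f (2 * q + 2) := by
  simp only [evenChord, fwdDiff] at h ⊢
  linear_combination -h

end Ring

variable {R : Type*} [CommRing R] [LinearOrder R] [IsStrictOrderedRing R] {f : ℕ → R} {q k d : ℕ}

lemma evenChord_succ_le_evenChord (hf : AntitoneOn (Δ_[1] f) (Set.Iic (2 * q + 2)))
    (hk : 2 * q + 2 ≤ k) : evenChord f (q + 1) (k : R) ≤ evenChord f q k := by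
  have hΔ₁ : Δ_[1] f (2 * q + 1) ≤ Δ_[1] f (2 * q) := hf (by simp) (by simp) (by simp)
  have hΔ₂ : Δ_[1] f (2 * q + 2) ≤ Δ_[1] f (2 * q + 1) := hf (by simp) (by simp) (by simp)
  have hk' : (2 * q + 2 : R) ≤ k := by exact_mod_cast hk
  rw [← sub_nonpos, evenChord_succ_sub_evenChord]
  exact add_nonpos (mul_nonpos_of_nonneg_of_nonpos (by linarith) (by linarith))
    (mul_nonpos_of_nonneg_of_nonpos (by linarith) (by linarith))

lemma evenChord_le_evenChord_succ (hf : AntitoneOn (Δ_[1] f) (Set.Iic (2 * q + 2)))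
    (hk : k ≤ 2 * q + 1) : evenChord f q (k : R) ≤ evenChord f (q + 1) k := by
  have hΔ₁ : Δ_[1] f (2 * q + 1) ≤ Δ_[1] f (2 * q) := hf (by simp) (by simp) (by simp)
  have hΔ₂ : Δ_[1] f (2 * q + 2) ≤ Δ_[1] f (2 * q + 1) := hf (by simp) (by simp) (by simp)
  have hk' : (k : R) ≤ 2 * q + 1 := by exact_mod_cast hk
  rw [← sub_nonneg, evenChord_succ_sub_evenChord]
  exact add_nonneg (mul_nonneg_of_nonpos_of_nonpos (by linarith) (by linarith))
    (mul_nonneg_of_nonpos_of_nonpos (by linarith) (by linarith))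

lemma sum_min_evenChord_succ_sub (hf : AntitoneOn (Δ_[1] f) (Set.Iic (2 * d))) (k : ℕ) :
    ∑ q ∈ range d, min (evenChord f (q + 1) (k : R) - evenChord f q k) 0
      = evenChord f (min (k / 2) d) k - evenChord f 0 k := by
  have concave_of_lt {q : ℕ} (hq : q < d) : AntitoneOn (Δ_[1] f) (Set.Iic (2 * q + 2)) :=
    hf.mono (Set.Iic_subset_Iic.2 (by lia))
  have min_eq_zero (q) (hq : q ∈ range d) (hq' : q ∉ range (min (k / 2) d)) :
      min (evenChord f (q + 1) (k : R) - evenChord f q k) 0 = 0 := by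
    rw [mem_range] at hq hq'
    exact min_eq_right (sub_nonneg.2 (evenChord_le_evenChord_succ (concave_of_lt hq) (by lia)))
  have min_eq_sub (q) (hq : q ∈ range (min (k / 2) d)) :
      min (evenChord f (q + 1) (k : R) - evenChord f q k) 0
        = evenChord f (q + 1) (k : R) - evenChord f q k := by
    rw [mem_range] at hq
    exact min_eq_left
      (sub_nonpos.2 (evenChord_succ_le_evenChord (concave_of_lt (by lia)) (by lia)))
  rw [← sum_subset (range_mono (min_le_right (k / 2) d)) min_eq_zero, sum_congr rfl min_eq_sub,
    sum_range_sub (evenChord f · (k : R))]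

end EvenChord

section ChooseResidual

/-- What remains of the value `C(k, m)` of `P_n^{(m)}` on vectors with `k` ones after subtracting
its quadratic part `L(n, m) * C(k, 2)`. -/
def chooseResidual (n m k : ℕ) : ℤ :=
  k.choose m - (n - 2).choose (m - 2) * k.choose 2

variable (n m : ℕ)

lemma fwdDiff_chooseResidual (k : ℕ) :
    Δ_[1] (chooseResidual (n + 2) (m + 2)) k = k.choose (m + 1) - n.choose m * k := by
  simp only [fwdDiff, chooseResidual, Nat.add_sub_cancel, Nat.choose_succ_succ',
    Nat.choose_one_right]
  push_cast
  ring

lemma fwdDiff_chooseResidual_succ_sub (k : ℕ) :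
    Δ_[1] (chooseResidual (n + 2) (m + 2)) (k + 1) - Δ_[1] (chooseResidual (n + 2) (m + 2)) k
      = k.choose m - n.choose m := by
  simp only [fwdDiff_chooseResidual, Nat.choose_succ_succ']
  push_cast
  ring

lemma antitoneOn_fwdDiff_chooseResidual :
    AntitoneOn (Δ_[1] (chooseResidual (n + 2) (m + 2))) (Set.Iic (n + 1)) := by
  refine antitoneOn_of_add_one_le Set.ordConnected_Iic fun k _ _ hk ↦ ?_
  have hk' : k ≤ n := by simpa using hk
  rw [← sub_nonpos, fwdDiff_chooseResidual_succ_sub, sub_nonpos]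
  exact_mod_cast Nat.choose_le_choose m hk'

lemma evenChord_zero_chooseResidual (t : ℤ) :
    evenChord (chooseResidual (n + 2) (m + 2)) 0 t = 0 := by
  simp [evenChord, fwdDiff_chooseResidual, chooseResidual]

lemma aCoef_add_bCoef_mul_eq_evenChord_sub (i : ℕ) (t : ℤ) :
    aCoef (n + 2) (m + 2) (i + 1) + bCoef (n + 2) (m + 2) (i + 1) * t
      = evenChord (chooseResidual (n + 2) (m + 2)) (i + 1) t
        - evenChord (chooseResidual (n + 2) (m + 2)) i t := by
  have pascal : (2 * (i + 1)).choose (m + 1)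
      = (2 * i + 1).choose m + ((2 * i).choose m + (2 * i).choose (m + 1)) := by
    rw [mul_add_one, Nat.choose_succ_succ', Nat.choose_succ_succ']
  have two_mul_succ_sub : 2 * (i + 1) - 2 = 2 * i := by lia
  rw [evenChord_succ_sub_evenChord, fwdDiff_chooseResidual_succ_sub,
    fwdDiff_chooseResidual_succ_sub n m (2 * i + 1)]
  simp only [aCoef, bCoef, Nat.add_sub_cancel, Nat.add_succ_sub_one, two_mul_succ_sub, pascal]
  push_cast
  ring

variable {n} {k : ℕ}

-- For even `n` the point `k = n + 2` has no chord of its own: the last one, through `n` and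
-- `n + 1`, reaches it because the second difference at `n` vanishes.
lemma evenChord_min_half_chooseResidual (hk : k ≤ n + 2) :
    evenChord (chooseResidual (n + 2) (m + 2)) (min (k / 2) ((n + 1) / 2)) k
      = chooseResidual (n + 2) (m + 2) k := by
  rcases le_or_gt (k / 2) ((n + 1) / 2) with h | h
  · rw [min_eq_left h, evenChord_half]
  · obtain ⟨q, rfl⟩ : ∃ q, n = 2 * q := ⟨n / 2, by lia⟩
    obtain rfl : k = 2 * q + 2 := by lia
    rw [min_eq_right h.le, show (2 * q + 1) / 2 = q by lia]
    have second_diff_eq_zero := fwdDiff_chooseResidual_succ_sub (2 * q) m (2 * q)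
    rw [sub_self, sub_eq_zero] at second_diff_eq_zero
    exact_mod_cast evenChord_two_mul_add_two second_diff_eq_zero

lemma inf'_sum_coef_eq_chooseResidual (hk : k ≤ n + 2) :
    univ.inf' univ_nonempty (fun w : Fin ((n + 1) / 2) → Bool ↦
        ∑ i, (if w i then (1 : ℤ) else 0) *
          (aCoef (n + 2) (m + 2) (i + 1) + bCoef (n + 2) (m + 2) (i + 1) * k))
      = chooseResidual (n + 2) (m + 2) k := by
  have hf : AntitoneOn (Δ_[1] (chooseResidual (n + 2) (m + 2))) (Set.Iic (2 * ((n + 1) / 2))) :=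
    (antitoneOn_fwdDiff_chooseResidual n m).mono (Set.Iic_subset_Iic.2 (by lia))
  simp only [aCoef_add_bCoef_mul_eq_evenChord_sub]
  rw [inf'_univ_sum_ite_mul_eq_sum_min,
    Fin.sum_univ_eq_sum_range (fun i ↦ min (evenChord (chooseResidual (n + 2) (m + 2)) (i + 1) k
      - evenChord (chooseResidual (n + 2) (m + 2)) i k) 0),
    sum_min_evenChord_succ_sub hf, evenChord_min_half_chooseResidual m hk,
    evenChord_zero_chooseResidual, sub_zero]

end ChooseResidual

theorem stmt_0_general (n m : ℕ) (hm : 2 ≤ m) (hn : 2 ≤ n)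
    (x : Fin n → ℤ) (hx : ∀ i, x i = 0 ∨ x i = 1) :
    symmPoly n m x
      = ((n - 2).choose (m - 2) : ℤ) *
          (∑ p ∈ Finset.univ.filter (fun p : Fin n × Fin n => p.1 < p.2), x p.1 * x p.2)
        + Finset.inf' Finset.univ Finset.univ_nonempty
            (fun w : Fin ((n - 1) / 2) → Bool =>
              ∑ i : Fin ((n - 1) / 2), (if w i then (1 : ℤ) else 0) *
                (aCoef n m ((i : ℕ) + 1) + bCoef n m ((i : ℕ) + 1) * ∑ j, x j)) := by
  obtain ⟨n, rfl⟩ := Nat.exists_eq_add_of_le' hn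
  obtain ⟨m, rfl⟩ := Nat.exists_eq_add_of_le' hm
  have hx' : ∀ i ∈ univ, x i = 0 ∨ x i = 1 := fun i _ ↦ hx i
  have card_ones_le : #{i | x i = 1} ≤ n + 2 := (card_le_univ _).trans_eq (Fintype.card_fin _)
  rw [symmPoly, sum_powersetCard_prod_eq_choose_of_binary _ hx', sum_eq_card_of_binary hx',
    ← univ_product_univ, sum_mul_lt_eq_choose_two_of_binary hx']
  exact eq_add_of_sub_eq' (inf'_sum_coef_eq_chooseResidual m card_ones_le).symm

theorem stmt_0 (n m : ℕ) (hm : 2 < m) (hmn : m < n)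
    (x : Fin n → ℤ) (hx : ∀ i, x i = 0 ∨ x i = 1) :
    symmPoly n m x
      = ((n - 2).choose (m - 2) : ℤ) *
          (∑ p ∈ Finset.univ.filter (fun p : Fin n × Fin n => p.1 < p.2), x p.1 * x p.2)
        + Finset.inf' Finset.univ Finset.univ_nonempty
            (fun w : Fin ((n - 1) / 2) → Bool =>
              ∑ i : Fin ((n - 1) / 2), (if w i then (1 : ℤ) else 0) *
                (aCoef n m ((i : ℕ) + 1) + bCoef n m ((i : ℕ) + 1) * ∑ j, x j)) :=
  stmt_0_general n m hm.le (by lia) x hx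
end

section
/- Let $n > m > 2$ be integers and let $d = \lfloor (n-m+2)/2 \rfloor$. For $1 \le i \le d$ define the integers $a_i(m) = (m-1)\left(\binom{m+2i-1}{m} - \binom{m+2i-3}{m}\right)$ and $b_i(m) = \binom{m+2i-4}{m-1} - \binom{m+2i-2}{m-1}$. Then for every binary vector $\mathbf{x} = (x_1,\dots,x_n) \in \{0,1\}^n$, $-P_n^{(m)}(\mathbf{x}) = \min_{\mathbf{w} \in \{0,1\}^d} \sum_{i=1}^{d} w_i\left(a_i(m) + b_i(m)\sum_{j=1}^{n} x_j\right)$, where the minimum is taken over all $\mathbf{w} = (w_1,\dots,w_d) \in \{0,1\}^d$ and all arithmetic is in $\mathbb{Z}$. -/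
/-- The coefficient `a_i(m)` from Theorem 2. -/
def aCoefNeg (m i : ℕ) : ℤ :=
  ((m : ℤ) - 1) * (((m + 2 * i - 1).choose m : ℤ) - ((m + 2 * i - 3).choose m : ℤ))

/-- The coefficient `b_i(m)` from Theorem 2. -/
def bCoefNeg (m i : ℕ) : ℤ :=
  ((m + 2 * i - 4).choose (m - 1) : ℤ) - ((m + 2 * i - 2).choose (m - 1) : ℤ)

/-!
With `k = ∑ j, x j` the claim is about `-(k.choose m)`, a concave function of `k`, so it is the
lower envelope of its secants `L p` through consecutive points `p`, `p + 1`. The coefficients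
satisfy `a_i + b_i * k = L (m + 2 * i - 2) k - L (m + 2 * i - 4) k`, and the minimum over `w`
selects the negative ones among these differences. By concavity these are the ones with
`m + 2 * i - 2 ≤ k`, and they telescope from `L (m - 2) = 0` to a secant whose value at `k` is
exactly `-(k.choose m)`.
-/

section ZeroOneValues

variable {ι R : Type*}

theorem ite_eq_one_eq_self [Zero R] [One R] [DecidableEq R] {a : R}
    (ha : a = 0 ∨ a = 1) : (if a = 1 then 1 else 0) = a := by
  grind

theorem sum_eq_card_filter_eq_one [NonAssocSemiring R] [DecidableEq R] {s : Finset ι} {x : ι → R}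
    (hx : ∀ i ∈ s, x i = 0 ∨ x i = 1) :
    ∑ i ∈ s, x i = ((s.filter fun i => x i = 1).card : R) := by
  rw [← Finset.sum_boole]
  exact Finset.sum_congr rfl fun i hi => (ite_eq_one_eq_self (hx i hi)).symm

theorem sum_powersetCard_prod_eq_choose [CommSemiring R] [DecidableEq R] {s : Finset ι}
    {x : ι → R} (hx : ∀ i ∈ s, x i = 0 ∨ x i = 1) (m : ℕ) :
    ∑ S ∈ Finset.powersetCard m s, ∏ i ∈ S, x i
      = ((s.filter fun i => x i = 1).card.choose m : R) := by
  have prod_eq_ite : ∀ S ∈ Finset.powersetCard m s,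
      ∏ i ∈ S, x i = if ∀ i ∈ S, x i = 1 then 1 else 0 := fun S hS => by
    have x_eq_ite : ∀ i ∈ S, x i = if x i = 1 then 1 else 0 := fun i hi =>
      (ite_eq_one_eq_self (hx i ((Finset.mem_powersetCard.1 hS).1 hi))).symm
    rw [Finset.prod_congr rfl x_eq_ite, Finset.prod_ite_zero, Finset.prod_const_one]
  have filter_powersetCard : (Finset.powersetCard m s).filter (fun S => ∀ i ∈ S, x i = 1)
      = Finset.powersetCard m (s.filter fun i => x i = 1) := by
    ext S
    simp only [Finset.mem_filter, Finset.mem_powersetCard, Finset.subset_iff]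
    grind
  rw [Finset.sum_congr rfl prod_eq_ite, Finset.sum_boole, filter_powersetCard,
    Finset.card_powersetCard]

theorem inf'_sum_ite_mul_eq_sum_min_zero [Fintype ι] [DecidableEq ι] [NonAssocSemiring R]
    [LinearOrder R] [IsOrderedAddMonoid R] (c : ι → R) :
    Finset.inf' Finset.univ Finset.univ_nonempty
        (fun w : ι → Bool => ∑ i, (if w i then (1 : R) else 0) * c i)
      = ∑ i, min (c i) 0 := by
  simp only [ite_mul, one_mul, zero_mul]
  apply le_antisymm
  · refine (Finset.inf'_le _ (Finset.mem_univ fun i => decide (c i ≤ 0))).trans_eq ?_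
    simp only [decide_eq_true_eq, min_def]
  · refine Finset.le_inf' _ _ fun w _ => Finset.sum_le_sum fun i _ => ?_
    split_ifs
    exacts [min_le_left _ _, min_le_right _ _]

end ZeroOneValues

theorem sum_range_min_sub_zero_of_valley {G : Type*} [AddCommGroup G] [LinearOrder G]
    [IsOrderedAddMonoid G] {f : ℕ → G} {t d : ℕ} (htd : t ≤ d)
    (descends : ∀ i < t, f (i + 1) ≤ f i) (ascends : ∀ i, t ≤ i → f i ≤ f (i + 1)) :
    ∑ i ∈ Finset.range d, min (f (i + 1) - f i) 0 = f t - f 0 := by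
  induction d, htd using Nat.le_induction with
  | base =>
    rw [← Finset.sum_range_sub]
    exact Finset.sum_congr rfl fun i hi =>
      min_eq_left (sub_nonpos.2 (descends i (Finset.mem_range.1 hi)))
  | succ d htd ih =>
    rw [Finset.sum_range_succ, ih, min_eq_right (sub_nonneg.2 (ascends d htd)), add_zero]

/-- The line through the points `p` and `p + 1` of the graph of `k ↦ -(k.choose (r + 1))`, in
point-slope form at `p`. -/
def chooseSecant (r p : ℕ) (k : ℤ) : ℤ :=
  -(p.choose (r + 1) : ℤ) - p.choose r * (k - p)

namespace chooseSecant

theorem apply_left (r p : ℕ) : chooseSecant r p p = -(p.choose (r + 1) : ℤ) := by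
  simp [chooseSecant]

theorem apply_right (r p : ℕ) :
    chooseSecant r p (p + 1 : ℕ) = -((p + 1).choose (r + 1) : ℤ) := by
  rw [chooseSecant, Nat.choose_succ_succ' p r]
  push_cast
  ring

theorem eq_zero_of_lt {r p : ℕ} (h : p < r) (k : ℤ) : chooseSecant r p k = 0 := by
  simp [chooseSecant, Nat.choose_eq_zero_of_lt h, Nat.choose_eq_zero_of_lt (h.trans r.lt_succ_self)]

theorem eq_intercept_sub_slope_mul (r p : ℕ) (k : ℤ) :
    chooseSecant r p k = r * (p + 1).choose (r + 1) - p.choose r * k := by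
  have absorption : ((p : ℤ) + 1) * p.choose r = (p + 1).choose (r + 1) * ((r : ℤ) + 1) := by
    exact_mod_cast Nat.add_one_mul_choose_eq p r
  have pascal : ((p + 1).choose (r + 1) : ℤ) = p.choose r + p.choose (r + 1) := by
    exact_mod_cast Nat.choose_succ_succ' p r
  rw [chooseSecant]
  linarith

-- Both secants pass through the point of abscissa `p + 1`, hence the factor `p + 1 - k`.
theorem succ_sub (r p : ℕ) (k : ℤ) :
    chooseSecant r (p + 1) k - chooseSecant r p k
      = ((p + 1).choose r - p.choose r : ℤ) * (p + 1 - k) := by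
  rw [chooseSecant, chooseSecant, Nat.choose_succ_succ' p r]
  push_cast
  ring

theorem choose_succ_sub_choose_nonneg (r p : ℕ) : (0 : ℤ) ≤ (p + 1).choose r - p.choose r :=
  sub_nonneg.2 (by exact_mod_cast Nat.choose_le_succ p r)

theorem le_succ (r : ℕ) {p : ℕ} {k : ℤ} (h : k ≤ p + 1) :
    chooseSecant r p k ≤ chooseSecant r (p + 1) k := by
  rw [← sub_nonneg, succ_sub]
  exact mul_nonneg (choose_succ_sub_choose_nonneg r p) (sub_nonneg.2 h)

theorem succ_le (r : ℕ) {p : ℕ} {k : ℤ} (h : (p : ℤ) + 1 ≤ k) :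
    chooseSecant r (p + 1) k ≤ chooseSecant r p k := by
  rw [← sub_nonpos, succ_sub]
  exact mul_nonpos_of_nonneg_of_nonpos (choose_succ_sub_choose_nonneg r p) (sub_nonpos.2 h)

theorem le_add_two (r : ℕ) {p : ℕ} {k : ℤ} (h : k ≤ p + 1) :
    chooseSecant r p k ≤ chooseSecant r (p + 2) k :=
  (le_succ r h).trans (le_succ r (by push_cast; linarith))

theorem add_two_le (r : ℕ) {p : ℕ} {k : ℤ} (h : (p : ℤ) + 2 ≤ k) :
    chooseSecant r (p + 2) k ≤ chooseSecant r p k :=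
  (succ_le r (by push_cast; linarith)).trans (succ_le r (by linarith))

end chooseSecant

theorem aCoefNeg_add_bCoefNeg_mul (r i : ℕ) (k : ℤ) :
    aCoefNeg (r + 2) (i + 1) + bCoefNeg (r + 2) (i + 1) * k
      = chooseSecant (r + 1) (r + 2 * (i + 1)) k - chooseSecant (r + 1) (r + 2 * i) k := by
  rw [chooseSecant.eq_intercept_sub_slope_mul, chooseSecant.eq_intercept_sub_slope_mul, aCoefNeg,
    bCoefNeg, show r + 2 + 2 * (i + 1) - 1 = r + 2 * (i + 1) + 1 by omega,
    show r + 2 + 2 * (i + 1) - 3 = r + 2 * i + 1 by omega,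
    show r + 2 + 2 * (i + 1) - 4 = r + 2 * i by omega,
    show r + 2 + 2 * (i + 1) - 2 = r + 2 * (i + 1) by omega,
    show r + 2 - 1 = r + 1 by omega]
  push_cast
  ring

theorem sum_min_aCoefNeg_add_bCoefNeg_mul_zero {m d k : ℕ} (hm : 2 ≤ m) (hk : k < m + 2 * d) :
    ∑ i ∈ Finset.range d, min (aCoefNeg m (i + 1) + bCoefNeg m (i + 1) * k) 0
      = -(k.choose m : ℤ) := by
  obtain ⟨r, rfl⟩ := Nat.exists_eq_add_of_le' hm
  set secant : ℕ → ℤ := fun t => chooseSecant (r + 1) (r + 2 * t) k with secant_def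
  obtain ⟨t, ht⟩ : ∃ t, t = (k - r) / 2 := ⟨_, rfl⟩
  have secant_zero : secant 0 = 0 := chooseSecant.eq_zero_of_lt (by omega) _
  have secant_t : secant t = -(k.choose (r + 2) : ℤ) := by
    obtain hkr | hk_left | hk_right : k < r ∨ k = r + 2 * t ∨ k = r + 2 * t + 1 := by omega
    · rw [show t = 0 by omega, secant_zero, Nat.choose_eq_zero_of_lt (by omega), Nat.cast_zero,
        neg_zero]
    · simp only [secant_def, ← hk_left, chooseSecant.apply_left]
    · simp only [secant_def]
      rw [hk_right]
      exact chooseSecant.apply_right _ _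
  have descends : ∀ i < t, secant (i + 1) ≤ secant i := fun i hi =>
    chooseSecant.add_two_le (p := r + 2 * i) _ (by omega)
  have ascends : ∀ i, t ≤ i → secant i ≤ secant (i + 1) := fun i hi =>
    chooseSecant.le_add_two (p := r + 2 * i) _ (by omega)
  simp only [aCoefNeg_add_bCoefNeg_mul]
  rw [sum_range_min_sub_zero_of_valley (f := secant) (by omega) descends ascends, secant_t,
    secant_zero, sub_zero]

theorem stmt_1_general {n m d : ℕ} (hm : 2 ≤ m) (hd : n < m + 2 * d)
    {x : Fin n → ℤ} (hx : ∀ i, x i = 0 ∨ x i = 1) :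
    -symmPoly n m x
      = Finset.inf' Finset.univ Finset.univ_nonempty
          (fun w : Fin d → Bool =>
            ∑ i : Fin d, (if w i then (1 : ℤ) else 0) *
              (aCoefNeg m ((i : ℕ) + 1) + bCoefNeg m ((i : ℕ) + 1) * ∑ j, x j)) := by
  have card_le : (Finset.univ.filter fun i => x i = 1).card ≤ n := card_finset_fin_le _
  rw [inf'_sum_ite_mul_eq_sum_min_zero, symmPoly,
    sum_powersetCard_prod_eq_choose (fun i _ => hx i), sum_eq_card_filter_eq_one (fun i _ => hx i),
    Fin.sum_univ_eq_sum_range fun i => min (aCoefNeg m (i + 1) + bCoefNeg m (i + 1) * _) 0,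
    sum_min_aCoefNeg_add_bCoefNeg_mul_zero hm (card_le.trans_lt hd)]

theorem stmt_1 (n m : ℕ) (hm : 2 < m) (hmn : m < n)
    (x : Fin n → ℤ) (hx : ∀ i, x i = 0 ∨ x i = 1) :
    -symmPoly n m x
      = Finset.inf' Finset.univ Finset.univ_nonempty
          (fun w : Fin ((n - m + 2) / 2) → Bool =>
            ∑ i : Fin ((n - m + 2) / 2), (if w i then (1 : ℤ) else 0) *
              (aCoefNeg m ((i : ℕ) + 1) + bCoefNeg m ((i : ℕ) + 1) * ∑ j, x j)) :=
  stmt_1_general hm.le (by omega) hx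
end

section
/- Let $n > m > 2$ be integers, let $d = \lfloor (n-1)/2 \rfloor$, and for $1 \le i \le d$ let $a_i(n,m) = (4i-1)\binom{n-2}{m-2} - 2i\binom{2i}{m-1} + 2i\binom{2i-2}{m-1} + \binom{2i-2}{m-2}$ and $b_i(n,m) = -2\binom{n-2}{m-2} + \binom{2i}{m-1} - \binom{2i-2}{m-1}$ (as integers). Then for every integer $l$ with $0 \le l \le n$, $\binom{l}{m} = \binom{n-2}{m-2}\binom{l}{2} + \sum_{i=1}^{d} \min\left(0,\ a_i(n,m) + b_i(n,m)\, l\right)$. -/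
/-!
Summing twice, `l.choose m = ∑ t < l, (l - 1 - t) * t.choose (m - 2)`. Subtracting this from the
same expansion of `K * l.choose 2` with `K = (n - 2).choose (m - 2)` leaves the weights
`K - t.choose (m - 2)`, which are nonnegative for `t ≤ n - 2` and vanish at `t = n - 2`.
Group `t = 2 * i - 2` with `t = 2 * i - 1`: the factors `l - 1 - t` of the two members never have
strictly opposite signs, so one minimum with `0` truncates both of them at once, and Pascal's rule
identifies the negative of the resulting affine function of `l` with `a_i + b_i * l`.
-/

open Finset

theorem sum_range_choose_eq_choose (l p : ℕ) :
    ∑ t ∈ range l, t.choose p = l.choose (p + 1) := by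
  induction l with
  | zero => simp
  | succ l ih => rw [sum_range_succ, ih, Nat.choose_succ_succ', add_comm]

theorem sum_range_sub_mul_choose (l p : ℕ) :
    ∑ t ∈ range l, (l - 1 - t) * t.choose p = l.choose (p + 2) := by
  induction l with
  | zero => simp
  | succ l ih =>
    have split_term : ∀ t ∈ range l,
        (l + 1 - 1 - t) * t.choose p = (l - 1 - t) * t.choose p + t.choose p := by
      intro t ht
      rw [← add_one_mul, show l + 1 - 1 - t = l - 1 - t + 1 by grind]
    rw [sum_range_succ, sum_congr rfl split_term, sum_add_distrib, ih,
      sum_range_choose_eq_choose, add_tsub_cancel_right, tsub_self, zero_mul, add_zero,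
      Nat.choose_succ_succ' l (p + 1), add_comm]

theorem sum_range_sub_mul_sub_choose {R : Type*} [CommRing R] (K : R) (l p : ℕ) :
    ∑ t ∈ range l, ((l - 1 - t : ℕ) : R) * (K - (t.choose p : R))
      = K * (l.choose 2 : R) - (l.choose (p + 2) : R) := by
  have choose_two : ∑ t ∈ range l, (l - 1 - t) = l.choose 2 := by
    simpa using sum_range_sub_mul_choose l 0
  rw [← choose_two, ← sum_range_sub_mul_choose l p]
  push_cast
  simp only [mul_sub, sum_sub_distrib, ← sum_mul, mul_comm K]

theorem sum_Icc_add_eq_sum_range_two_mul {M : Type*} [AddCommMonoid M] (f : ℕ → M) (d : ℕ) :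
    ∑ i ∈ Icc 1 d, (f (2 * i - 2) + f (2 * i - 1)) = ∑ t ∈ range (2 * d), f t := by
  induction d with
  | zero => simp
  | succ d ih =>
    rw [sum_Icc_succ_top (by omega), ih, mul_add_one, sum_range_succ, sum_range_succ, add_assoc]
    rfl

section OrderedRing

variable {R : Type*} [CommRing R] [LinearOrder R] [IsStrictOrderedRing R]

theorem min_zero_neg_add_eq_neg_truncated {u v : R} (hu : 0 ≤ u) (hv : 0 ≤ v) (l t : ℕ) :
    min 0 (-(((l : R) - 1 - t) * u + ((l : R) - 2 - t) * v))
      = -(((l - 1 - t : ℕ) : R) * u + ((l - 2 - t : ℕ) : R) * v) := by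
  rcases le_or_gt (t + 2) l with htl | hlt
  · obtain ⟨k, rfl⟩ := Nat.exists_eq_add_of_le htl
    have cast_fst : ((t + 2 + k : ℕ) : R) - 1 - t = k + 1 := by push_cast; ring
    have cast_snd : ((t + 2 + k : ℕ) : R) - 2 - t = k := by push_cast; ring
    rw [cast_fst, cast_snd, show t + 2 + k - 1 - t = k + 1 by omega,
      show t + 2 + k - 2 - t = k by omega, Nat.cast_add_one]
    exact min_eq_right (neg_nonpos.2 (by positivity))
  · have fst_nonpos : (l : R) - 1 - t ≤ 0 := by
      have : (l : R) ≤ t + 1 := mod_cast Nat.le_of_lt_succ hlt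
      linarith
    have pair_nonpos : ((l : R) - 1 - t) * u + ((l : R) - 2 - t) * v ≤ 0 :=
      add_nonpos (mul_nonpos_of_nonpos_of_nonneg fst_nonpos hu)
        (mul_nonpos_of_nonpos_of_nonneg (by linarith) hv)
    rw [min_eq_left (neg_nonneg.2 pair_nonpos), show l - 1 - t = 0 by omega,
      show l - 2 - t = 0 by omega]
    simp

theorem sum_min_zero_eq_neg_sum_range {w : ℕ → R} {n l : ℕ} (hw : ∀ t ≤ n - 2, 0 ≤ w t)
    (hw_top : w (n - 2) = 0) (hl : l ≤ n) :
    ∑ i ∈ Icc 1 ((n - 1) / 2),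
        min 0 (-(((l : R) + 1 - 2 * i) * w (2 * i - 2) + ((l : R) - 2 * i) * w (2 * i - 1)))
      = -∑ t ∈ range l, ((l - 1 - t : ℕ) : R) * w t := by
  set f : ℕ → R := fun t ↦ ((l - 1 - t : ℕ) : R) * w t with hf
  have min_eq : ∀ i ∈ Icc 1 ((n - 1) / 2),
      min 0 (-(((l : R) + 1 - 2 * i) * w (2 * i - 2) + ((l : R) - 2 * i) * w (2 * i - 1)))
        = -(f (2 * i - 2) + f (2 * i - 1)) := by
    intro i hi
    rw [mem_Icc] at hi
    obtain ⟨j, rfl⟩ := Nat.exists_eq_add_of_le' hi.1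
    have truncated := min_zero_neg_add_eq_neg_truncated
      (hw (2 * j) (by omega)) (hw (2 * j + 1) (by omega)) l (2 * j)
    simp only [hf, show 2 * (j + 1) - 2 = 2 * j by omega,
      show 2 * (j + 1) - 1 = 2 * j + 1 by omega,
      show l - 1 - (2 * j + 1) = l - 2 - 2 * j by omega, ← truncated]
    push_cast
    ring_nf
  have sum_f_eq : ∑ t ∈ range (2 * ((n - 1) / 2)), f t = ∑ t ∈ range l, f t := by
    refine sum_congr_of_eq_on_inter (fun t _ ht ↦ ?_) (fun t ht ht' ↦ ?_) fun _ _ _ ↦ rfl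
    · simp [hf, show l - 1 - t = 0 by grind]
    · rw [mem_range] at ht ht'
      obtain rfl | last : t = n - 2 ∨ l - 1 - t = 0 := by omega
      · simp [hf, hw_top]
      · simp [hf, last]
  rw [sum_congr rfl min_eq, sum_neg_distrib, sum_Icc_add_eq_sum_range_two_mul, sum_f_eq]

end OrderedRing

theorem aCoef_add_bCoef_mul {m i : ℕ} (hm : 2 ≤ m) (hi : 1 ≤ i) (n : ℕ) (x : ℤ) :
    aCoef n m i + bCoef n m i * x
      = -((x + 1 - 2 * i) * (((n - 2).choose (m - 2) : ℤ) - ((2 * i - 2).choose (m - 2) : ℤ))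
        + (x - 2 * i) * (((n - 2).choose (m - 2) : ℤ) - ((2 * i - 1).choose (m - 2) : ℤ))) := by
  obtain ⟨p, rfl⟩ := Nat.exists_eq_add_of_le' hm
  obtain ⟨j, rfl⟩ := Nat.exists_eq_add_of_le' hi
  have pascal_twice : (2 * (j + 1)).choose (p + 1)
      = (2 * j + 1).choose p + ((2 * j).choose p + (2 * j).choose (p + 1)) := by
    rw [mul_add_one, Nat.choose_succ_succ', Nat.choose_succ_succ']
  simp only [aCoef, bCoef, Nat.add_sub_cancel, show p + 2 - 1 = p + 1 by omega,
    show 2 * (j + 1) - 2 = 2 * j by omega, show 2 * (j + 1) - 1 = 2 * j + 1 by omega, pascal_twice]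
  push_cast
  ring

theorem stmt_3_general {n m l : ℕ} (hm : 2 ≤ m) (hl : l ≤ n) :
    (l.choose m : ℤ)
      = ((n - 2).choose (m - 2) : ℤ) * (l.choose 2 : ℤ)
        + ∑ i ∈ Icc 1 ((n - 1) / 2), min 0 (aCoef n m i + bCoef n m i * (l : ℤ)) := by
  let w (t : ℕ) : ℤ := ((n - 2).choose (m - 2) : ℤ) - (t.choose (m - 2) : ℤ)
  have hw : ∀ t ≤ n - 2, 0 ≤ w t := fun t ht ↦
    sub_nonneg.2 (mod_cast Nat.choose_le_choose _ ht)
  have sum_weights : ∑ t ∈ range l, ((l - 1 - t : ℕ) : ℤ) * w t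
      = ((n - 2).choose (m - 2) : ℤ) * (l.choose 2 : ℤ) - (l.choose m : ℤ) := by
    rw [sum_range_sub_mul_sub_choose, Nat.sub_add_cancel hm]
  have sum_min : ∑ i ∈ Icc 1 ((n - 1) / 2), min 0 (aCoef n m i + bCoef n m i * (l : ℤ))
      = -∑ t ∈ range l, ((l - 1 - t : ℕ) : ℤ) * w t := by
    rw [← sum_min_zero_eq_neg_sum_range hw (sub_self _) hl]
    exact sum_congr rfl fun i hi ↦ by rw [aCoef_add_bCoef_mul hm (mem_Icc.1 hi).1]
  rw [sum_min, sum_weights]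
  ring

theorem stmt_3 (n m : ℕ) (hm : 2 < m) (hmn : m < n)
    (l : ℕ) (hl : l ≤ n) :
    (l.choose m : ℤ)
      = ((n - 2).choose (m - 2) : ℤ) * (l.choose 2 : ℤ)
        + ∑ i ∈ Finset.Icc 1 ((n - 1) / 2),
            min 0 (aCoef n m i + bCoef n m i * (l : ℤ)) :=
  stmt_3_general hm.le hl
end

section
/- Let $n > m > 2$ be integers and define the integer sequence $A_l = \binom{l}{m} - \binom{n-2}{m-2}\binom{l}{2}$ for $0 \le l \le n$. Then $A_0 = A_1 = 0$ and the sequence is strictly decreasing from index $1$ on: $A_{l+1} < A_l$ for every integer $l$ with $1 \le l \le n-1$. In particular $A_l < 0$ for all $2 \le l \le n$, i.e. $\binom{l}{m} < \binom{n-2}{m-2}\binom{l}{2}$ for $2 \le l \le n$. -/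
/-!
Everything comes from one inequality: `l.choose k < (n - s).choose (k - s) * l.choose s` for
`0 < s < k ≤ n` and `s ≤ l ≤ n`. It holds because
`l.choose k * k.choose s = l.choose s * (l - s).choose (k - s)` with `k.choose s > 1`.
Replace the lower index `2` in the definition of `A` by any `r` with `1 < r < m`. The pair
`(s, k) = (r, m)` gives the negativity of `A`; by Pascal's rule, the pair `(r - 1, m - 1)` with
`n - 1` in place of `n` gives the negativity of its differences.
-/

theorem one_lt_choose {k s : ℕ} (hs : 0 < s) (hsk : s < k) : 1 < k.choose s := by
  have hpos : 0 < k.choose s := Nat.choose_pos hsk.le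
  have hne : k.choose s ≠ 1 := by
    rw [Ne, Nat.choose_eq_one_iff]
    omega
  omega

theorem choose_lt_choose_sub_mul_choose {n k s l : ℕ} (hs : 0 < s) (hsk : s < k) (hkn : k ≤ n)
    (hsl : s ≤ l) (hln : l ≤ n) :
    l.choose k < (n - s).choose (k - s) * l.choose s := by
  rcases lt_or_ge l k with hlk | hkl
  · rw [Nat.choose_eq_zero_of_lt hlk]
    exact Nat.mul_pos (Nat.choose_pos (by omega)) (Nat.choose_pos hsl)
  · calc
      l.choose k < l.choose k * k.choose s :=
        lt_mul_of_one_lt_right (Nat.choose_pos hkl) (one_lt_choose hs hsk)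
      _ = (l - s).choose (k - s) * l.choose s := by
        rw [Nat.choose_mul hsk.le, mul_comm]
      _ ≤ (n - s).choose (k - s) * l.choose s := by
        gcongr

theorem choose_sub_mul_choose_succ_lt {n m r l : ℕ} (hr : 1 < r) (hrm : r < m) (hmn : m ≤ n)
    (hrl : r ≤ l + 1) (hln : l < n) :
    ((l + 1).choose m : ℤ) - ((n - r).choose (m - r) : ℤ) * ((l + 1).choose r : ℤ) <
      (l.choose m : ℤ) - ((n - r).choose (m - r) : ℤ) * (l.choose r : ℤ) := by
  obtain ⟨s, rfl⟩ : ∃ s, r = s + 1 := ⟨r - 1, by omega⟩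
  obtain ⟨k, rfl⟩ : ∃ k, m = k + 1 := ⟨m - 1, by omega⟩
  obtain ⟨N, rfl⟩ : ∃ N, n = N + 1 := ⟨n - 1, by omega⟩
  have hdiff : (l.choose k : ℤ) < ((N - s).choose (k - s) : ℤ) * (l.choose s : ℤ) := by
    exact_mod_cast choose_lt_choose_sub_mul_choose (n := N) (k := k) (s := s) (l := l)
      (by omega) (by omega) (by omega) (by omega) (by omega)
  simp only [Nat.choose_succ_succ', Nat.add_sub_add_right, Nat.cast_add]
  linarith

theorem stmt_5_general {n m r : ℕ} (hr : 1 < r) (hrm : r < m) (hmn : m ≤ n) {A : ℕ → ℤ}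
    (hA : ∀ l, A l = (l.choose m : ℤ) - ((n - r).choose (m - r) : ℤ) * (l.choose r : ℤ)) :
    (∀ l < r, A l = 0)
      ∧ (∀ l, r ≤ l + 1 → l < n → A (l + 1) < A l)
      ∧ (∀ l, r ≤ l → l ≤ n →
          (l.choose m : ℤ) < ((n - r).choose (m - r) : ℤ) * (l.choose r : ℤ)) := by
  refine ⟨fun l hlr => ?_, fun l hrl hln => ?_, fun l hrl hln => ?_⟩
  · simp [hA, Nat.choose_eq_zero_of_lt hlr, Nat.choose_eq_zero_of_lt (hlr.trans hrm)]
  · simpa only [hA] using choose_sub_mul_choose_succ_lt hr hrm hmn hrl hln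
  · exact_mod_cast choose_lt_choose_sub_mul_choose (zero_lt_one.trans hr) hrm hmn hrl hln

theorem stmt_5 (n m : ℕ) (hm : 2 < m) (hmn : m < n)
    (A : ℕ → ℤ)
    (hA : ∀ l, A l = (l.choose m : ℤ) - ((n - 2).choose (m - 2) : ℤ) * (l.choose 2 : ℤ)) :
    A 0 = 0 ∧ A 1 = 0
      ∧ (∀ l : ℕ, 1 ≤ l → l ≤ n - 1 → A (l + 1) < A l)
      ∧ (∀ l : ℕ, 2 ≤ l → l ≤ n → A l < 0)
      ∧ (∀ l : ℕ, 2 ≤ l → l ≤ n →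
          (l.choose m : ℤ) < ((n - 2).choose (m - 2) : ℤ) * (l.choose 2 : ℤ)) := by
  obtain ⟨hzero, hdec, hlt⟩ := stmt_5_general one_lt_two hm hmn.le hA
  exact ⟨hzero 0 two_pos, hzero 1 one_lt_two, fun l hl hln => hdec l (by omega) (by omega),
    fun l hl hln => hA l ▸ sub_neg.mpr (hlt l hl hln), hlt⟩
end

section
/- Let $n > m > 2$ be integers and for $i \ge 1$ define the integers $a_i(n,m) = (4i-1)\binom{n-2}{m-2} - 2i\binom{2i}{m-1} + 2i\binom{2i-2}{m-1} + \binom{2i-2}{m-2}$ and $b_i(n,m) = -2\binom{n-2}{m-2} + \binom{2i}{m-1} - \binom{2i-2}{m-1}$. Then for every integer $i \ge 1$ the partial sum of the arithmetic progressions matches the target sequence at the indices $2i$ and $2i+1$: $\sum_{k=1}^{i}\left(a_k(n,m) + 2i\, b_k(n,m)\right) = \binom{2i}{m} - \binom{n-2}{m-2}\binom{2i}{2}$ and $\sum_{k=1}^{i}\left(a_k(n,m) + (2i+1)\, b_k(n,m)\right) = \binom{2i+1}{m} - \binom{n-2}{m-2}\binom{2i+1}{2}$. -/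
/-!
Let `L i` be the affine function through the points `(2i, f (2i))` and `(2i+1, f (2i+1))` of the
target sequence `f j = C(j,m) - C(n-2,m-2) C(j,2)`. The `k`-th progression is exactly the increment
`a_k + x b_k = L k x - L (k-1) x`, and `L 0 = 0`, so the first `i` progressions telescope to `L i`,
which agrees with `f` at `2i` and `2i+1`.
-/

section Interpolation

variable {R : Type*} [Ring R]

/-- The affine function of `x` that interpolates the sequence `f` at the two consecutive indices
`j` and `j + 1`, in Newton's form. -/
def linearInterp (f : ℕ → R) (j : ℕ) (x : R) : R :=
  f j + (x - j) * (f (j + 1) - f j)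

theorem linearInterp_left (f : ℕ → R) (j : ℕ) : linearInterp f j j = f j := by
  simp [linearInterp]

theorem linearInterp_right (f : ℕ → R) (j : ℕ) : linearInterp f j (j + 1) = f (j + 1) := by
  simp [linearInterp]

/-- The target sequence `j ↦ C(j,m) - c C(j,2)`; the theorem is about `c = C(n-2,m-2)`. -/
def chooseSubMulChooseTwo (c : R) (m j : ℕ) : R :=
  j.choose m - c * j.choose 2

theorem chooseSubMulChooseTwo_succ (c : R) (m j : ℕ) :
    chooseSubMulChooseTwo c (m + 1) (j + 1)
      = chooseSubMulChooseTwo c (m + 1) j + (j.choose m - c * j) := by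
  simp only [chooseSubMulChooseTwo, Nat.choose_succ_succ' j, Nat.choose_one_right,
    Nat.cast_add, mul_add]
  abel

theorem linearInterp_chooseSubMulChooseTwo (c : R) (m j : ℕ) (x : R) :
    linearInterp (chooseSubMulChooseTwo c (m + 1)) j x
      = chooseSubMulChooseTwo c (m + 1) j + (x - j) * (j.choose m - c * j) := by
  rw [linearInterp, chooseSubMulChooseTwo_succ, add_sub_cancel_left]

theorem linearInterp_chooseSubMulChooseTwo_zero (c : R) (m : ℕ) (x : R) :
    linearInterp (chooseSubMulChooseTwo c (m + 2)) 0 x = 0 := by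
  simp [linearInterp_chooseSubMulChooseTwo, chooseSubMulChooseTwo]

end Interpolation

theorem aCoef_add_mul_bCoef_succ (n m k : ℕ) (x : ℤ) :
    aCoef n (m + 2) (k + 1) + x * bCoef n (m + 2) (k + 1)
      = linearInterp (chooseSubMulChooseTwo ((n - 2).choose m : ℤ) (m + 2)) (2 * (k + 1)) x
        - linearInterp (chooseSubMulChooseTwo ((n - 2).choose m : ℤ) (m + 2)) (2 * k) x := by
  have pascal : ((2 * k + 1).choose (m + 1) : ℤ) = (2 * k).choose m + (2 * k).choose (m + 1) := by
    exact_mod_cast Nat.choose_succ_succ' (2 * k) m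
  simp only [linearInterp_chooseSubMulChooseTwo, mul_add_one, chooseSubMulChooseTwo_succ, pascal,
    aCoef, bCoef, Nat.add_sub_cancel, Nat.add_succ_sub_one]
  push_cast
  ring

theorem sum_aCoef_add_mul_bCoef {m : ℕ} (hm : 2 ≤ m) (n i : ℕ) (x : ℤ) :
    ∑ k ∈ Finset.Icc 1 i, (aCoef n m k + x * bCoef n m k)
      = linearInterp (chooseSubMulChooseTwo ((n - 2).choose (m - 2) : ℤ) m) (2 * i) x := by
  obtain ⟨m, rfl⟩ := Nat.exists_eq_add_of_le' hm
  induction i with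
  | zero => simp [linearInterp_chooseSubMulChooseTwo_zero]
  | succ i ih =>
    rw [Finset.sum_Icc_succ_top (Nat.le_add_left 1 i), ih, aCoef_add_mul_bCoef_succ,
      Nat.add_sub_cancel, add_sub_cancel]

theorem stmt_8_general (n m : ℕ) (hm : 2 ≤ m) (i : ℕ) :
    (∑ k ∈ Finset.Icc 1 i, (aCoef n m k + 2 * (i : ℤ) * bCoef n m k)
        = ((2 * i).choose m : ℤ) - ((n - 2).choose (m - 2) : ℤ) * ((2 * i).choose 2 : ℤ))
      ∧ (∑ k ∈ Finset.Icc 1 i, (aCoef n m k + (2 * (i : ℤ) + 1) * bCoef n m k)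
          = ((2 * i + 1).choose m : ℤ)
            - ((n - 2).choose (m - 2) : ℤ) * ((2 * i + 1).choose 2 : ℤ)) := by
  have cast_two_mul : 2 * (i : ℤ) = (2 * i : ℕ) := by norm_cast
  simp only [sum_aCoef_add_mul_bCoef hm, cast_two_mul]
  exact ⟨linearInterp_left _ _, linearInterp_right _ _⟩

theorem stmt_8 (n m : ℕ) (hm : 2 < m) (hmn : m < n) (i : ℕ) (hi : 1 ≤ i) :
    (∑ k ∈ Finset.Icc 1 i, (aCoef n m k + 2 * (i : ℤ) * bCoef n m k)
        = ((2 * i).choose m : ℤ) - ((n - 2).choose (m - 2) : ℤ) * ((2 * i).choose 2 : ℤ))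
      ∧ (∑ k ∈ Finset.Icc 1 i, (aCoef n m k + (2 * (i : ℤ) + 1) * bCoef n m k)
          = ((2 * i + 1).choose m : ℤ)
            - ((n - 2).choose (m - 2) : ℤ) * ((2 * i + 1).choose 2 : ℤ)) :=
  stmt_8_general n m hm.le i
end

section
/- Let $m > 2$ be an integer and for $i \ge 1$ define the integers $a_i(m) = (m-1)\left(\binom{m+2i-1}{m} - \binom{m+2i-3}{m}\right)$ and $b_i(m) = \binom{m+2i-4}{m-1} - \binom{m+2i-2}{m-1}$. Then for every integer $i \ge 1$ the partial sum of the arithmetic progressions matches the target sequence at the indices $m+2i-2$ and $m+2i-1$: $\sum_{k=1}^{i}\left(a_k(m) + (m+2i-2)\, b_k(m)\right) = -\binom{m+2i-2}{m}$ and $\sum_{k=1}^{i}\left(a_k(m) + (m+2i-1)\, b_k(m)\right) = -\binom{m+2i-1}{m}$. -/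
/-!
Both coefficients are differences of consecutive terms of a sequence vanishing at `i = 0`, so the
progressions with common parameter `x` telescope to
`(m - 1) * (m + 2 * i - 1).choose m - x * (m + 2 * i - 2).choose (m - 1)`.
With `N = m + 2 * i - 2`, the values `x = N` and `x = N + 1` are then instances of the absorption
identity `(N + 1) * N.choose (m - 1) = m * (N + 1).choose m`, combined with Pascal's rule when
`x = N`.
-/

theorem mul_choose_succ_succ_add_choose_succ (n k : ℕ) :
    k * (n + 1).choose (k + 1) + n.choose (k + 1) = n * n.choose k := by
  have absorption := Nat.add_one_mul_choose_eq n k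
  have pascal := Nat.choose_succ_succ n k
  linarith

theorem sum_Icc_aCoefNeg {m : ℕ} (hm : 1 ≤ m) (i : ℕ) :
    ∑ k ∈ Finset.Icc 1 i, aCoefNeg m k = ((m : ℤ) - 1) * ((m + 2 * i - 1).choose m : ℤ) := by
  induction i with
  | zero => simp [Nat.choose_eq_zero_of_lt (show m - 1 < m by omega)]
  | succ n ih =>
    rw [Finset.sum_Icc_succ_top (by omega), ih, aCoefNeg,
      show m + 2 * (n + 1) - 3 = m + 2 * n - 1 by omega]
    ring

theorem sum_Icc_bCoefNeg {m : ℕ} (hm : 2 ≤ m) (i : ℕ) :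
    ∑ k ∈ Finset.Icc 1 i, bCoefNeg m k = -((m + 2 * i - 2).choose (m - 1) : ℤ) := by
  induction i with
  | zero => simp [Nat.choose_eq_zero_of_lt (show m - 2 < m - 1 by omega)]
  | succ n ih =>
    rw [Finset.sum_Icc_succ_top (by omega), ih, bCoefNeg,
      show m + 2 * (n + 1) - 4 = m + 2 * n - 2 by omega]
    ring

theorem sum_Icc_aCoefNeg_add_mul_bCoefNeg {m : ℕ} (hm : 2 ≤ m) (i : ℕ) (x : ℤ) :
    ∑ k ∈ Finset.Icc 1 i, (aCoefNeg m k + x * bCoefNeg m k) =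
      ((m : ℤ) - 1) * ((m + 2 * i - 1).choose m : ℤ) -
        x * ((m + 2 * i - 2).choose (m - 1) : ℤ) := by
  rw [Finset.sum_add_distrib, ← Finset.mul_sum, sum_Icc_aCoefNeg (by omega), sum_Icc_bCoefNeg hm]
  ring

theorem sum_Icc_aCoefNeg_add_mul_bCoefNeg_eq_neg_choose_sub_two {m : ℕ} (hm : 2 ≤ m) (i : ℕ) :
    ∑ k ∈ Finset.Icc 1 i, (aCoefNeg m k + ((m : ℤ) + 2 * (i : ℤ) - 2) * bCoefNeg m k) =
      -((m + 2 * i - 2).choose m : ℤ) := by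
  rw [sum_Icc_aCoefNeg_add_mul_bCoefNeg hm]
  obtain ⟨q, rfl⟩ := Nat.exists_eq_add_of_le' hm
  have h := mul_choose_succ_succ_add_choose_succ (q + 2 * i) (q + 1)
  rw [show q + 2 + 2 * i - 1 = q + 2 * i + 1 by omega,
    show q + 2 + 2 * i - 2 = q + 2 * i by omega, show q + 2 - 1 = q + 1 by omega]
  zify at h
  push_cast
  linear_combination h

theorem sum_Icc_aCoefNeg_add_mul_bCoefNeg_eq_neg_choose_sub_one {m : ℕ} (hm : 2 ≤ m) (i : ℕ) :
    ∑ k ∈ Finset.Icc 1 i, (aCoefNeg m k + ((m : ℤ) + 2 * (i : ℤ) - 1) * bCoefNeg m k) =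
      -((m + 2 * i - 1).choose m : ℤ) := by
  rw [sum_Icc_aCoefNeg_add_mul_bCoefNeg hm]
  obtain ⟨q, rfl⟩ := Nat.exists_eq_add_of_le' hm
  have absorption := Nat.add_one_mul_choose_eq (q + 2 * i) (q + 1)
  rw [show q + 2 + 2 * i - 1 = q + 2 * i + 1 by omega,
    show q + 2 + 2 * i - 2 = q + 2 * i by omega, show q + 2 - 1 = q + 1 by omega]
  zify at absorption
  push_cast
  linear_combination -absorption

theorem stmt_10 (m : ℕ) (hm : 2 < m) (i : ℕ) (hi : 1 ≤ i) :
    (∑ k ∈ Finset.Icc 1 i, (aCoefNeg m k + ((m : ℤ) + 2 * (i : ℤ) - 2) * bCoefNeg m k)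
        = -((m + 2 * i - 2).choose m : ℤ))
      ∧ (∑ k ∈ Finset.Icc 1 i, (aCoefNeg m k + ((m : ℤ) + 2 * (i : ℤ) - 1) * bCoefNeg m k)
          = -((m + 2 * i - 1).choose m : ℤ)) :=
  ⟨sum_Icc_aCoefNeg_add_mul_bCoefNeg_eq_neg_choose_sub_two hm.le i,
    sum_Icc_aCoefNeg_add_mul_bCoefNeg_eq_neg_choose_sub_one hm.le i⟩
end

section
/- (Freedman's degree reduction for negative monomials.) Let $d \ge 1$ and let $x_1, \dots, x_d \in \{0,1\} \subseteq \mathbb{Z}$. Then $-\prod_{j=1}^{d} x_j = \min_{w \in \{0,1\}} w\left((d-1) - \sum_{j=1}^{d} x_j\right)$. -/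
/-! The slack `(d - 1) - ∑ x j` is one less than the number of vanishing `x j`. If every `x j` is
`1` it equals `-1`, so the minimum is attained at `w = 1`; if some `x j` vanishes it is nonnegative,
so `w = 0` is optimal. In both cases the minimum is `-∏ x j`. -/

section FreedmanReduction

variable {ι R : Type*}

theorem inf'_univ_bool {α : Type*} [SemilatticeInf α] (f : Bool → α) :
    Finset.univ.inf' Finset.univ_nonempty f = f true ⊓ f false := by
  simp only [Fintype.univ_bool, Finset.inf'_insert, Finset.inf'_singleton,
    Finset.singleton_nonempty]

theorem sum_le_card_sub_one_of_eq_zero [AddCommGroupWithOne R] [PartialOrder R]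
    [IsOrderedAddMonoid R] {s : Finset ι} {x : ι → R} (hx : ∀ i ∈ s, x i ≤ 1) {j : ι} (hj : j ∈ s)
    (hxj : x j = 0) : ∑ i ∈ s, x i ≤ (s.card : R) - 1 := by
  classical
  calc ∑ i ∈ s, x i
      = ∑ i ∈ s.erase j, x i := (Finset.sum_erase s hxj).symm
    _ ≤ (s.erase j).card • (1 : R) :=
        Finset.sum_le_card_nsmul _ _ _ fun i hi => hx i (Finset.mem_of_mem_erase hi)
    _ = (s.card : R) - 1 := by
        rw [nsmul_one, Finset.cast_card_erase_of_mem hj]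

variable [CommRing R] [LinearOrder R] [IsOrderedRing R]

theorem neg_prod_eq_min_card_sub_one_sub_sum (s : Finset ι) {x : ι → R}
    (hx : ∀ j ∈ s, x j = 0 ∨ x j = 1) :
    -∏ j ∈ s, x j = min ((s.card : R) - 1 - ∑ j ∈ s, x j) 0 := by
  by_cases hone : ∀ j ∈ s, x j = 1
  · have hsum : ∑ j ∈ s, x j = s.card := by
      rw [Finset.sum_congr rfl hone, Finset.sum_const, nsmul_one]
    rw [Finset.prod_eq_one hone, hsum, sub_sub_cancel_left, min_eq_left (neg_nonpos.2 zero_le_one)]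
  · push Not at hone
    obtain ⟨j, hj, hxj⟩ := hone
    have hzero : x j = 0 := (hx j hj).resolve_right hxj
    have hle : ∀ i ∈ s, x i ≤ 1 := fun i hi =>
      (hx i hi).elim (fun h => h.trans_le zero_le_one) le_of_eq
    have hslack : 0 ≤ (s.card : R) - 1 - ∑ i ∈ s, x i :=
      sub_nonneg.2 (sum_le_card_sub_one_of_eq_zero hle hj hzero)
    rw [Finset.prod_eq_zero hj hzero, neg_zero, min_eq_right hslack]

theorem stmt_16_general (s : Finset ι) {x : ι → R} (hx : ∀ j ∈ s, x j = 0 ∨ x j = 1) :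
    -∏ j ∈ s, x j
      = Finset.inf' Finset.univ Finset.univ_nonempty
          (fun w : Bool => (if w then (1 : R) else 0) * ((s.card : R) - 1 - ∑ j ∈ s, x j)) := by
  rw [neg_prod_eq_min_card_sub_one_sub_sum s hx, inf'_univ_bool]
  simp only [if_true, Bool.false_eq_true, if_false, one_mul, zero_mul]

end FreedmanReduction

theorem stmt_16 (d : ℕ) (hd : 1 ≤ d)
    (x : Fin d → ℤ) (hx : ∀ j, x j = 0 ∨ x j = 1) :
    -(∏ j, x j)
      = Finset.inf' Finset.univ Finset.univ_nonempty
          (fun w : Bool =>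
            (if w then (1 : ℤ) else 0) * (((d : ℤ) - 1) - ∑ j, x j)) := by
  simpa only [Finset.card_fin] using stmt_16_general Finset.univ fun j _ => hx j
end

section
/- (Ishikawa's degree reduction for positive monomials of even degree.) Let $d \ge 2$ and let $x_1, \dots, x_{2d} \in \{0,1\} \subseteq \mathbb{Z}$. Then $\prod_{j=1}^{2d} x_j = \sum_{1 \le i < j \le 2d} x_i x_j + \min_{\mathbf{w} \in \{0,1\}^{d-1}}\left[\sum_{i=1}^{d-1} (4i-1) w_i - 2\left(\sum_{i=1}^{d-1} w_i\right)\left(\sum_{j=1}^{2d} x_j\right)\right]$, where the minimum is over all $\mathbf{w} = (w_1, \dots, w_{d-1}) \in \{0,1\}^{d-1}$. -/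
/-!
Since `2k - (4i - 1)` is the gain of switching `w i` on when exactly `k` of the `x j` equal `1`,
each `w i` can be optimised on its own, and the minimum equals `∑ i, min 0 (4i - 1 - 2k)`, where
`1 ≤ i ≤ d - 1`. For `k ≤ 2d - 1` this is `-k(k-1)/2`, which cancels the `k(k-1)/2` pairs
`x i * x j` equal to `1`. For `k = 2d` full cancellation would need the further index `i = d`;
its absence leaves `-(4d - 1 - 4d) = 1`.
-/

open Finset

theorem inf'_pi_sum_eq_sum_inf' {ι M : Type*} {κ : ι → Type*} [Fintype ι] [DecidableEq ι]
    [∀ i, Fintype (κ i)] [∀ i, Nonempty (κ i)]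
    [AddCommMonoid M] [LinearOrder M] [IsOrderedAddMonoid M] (f : ∀ i, κ i → M) :
    univ.inf' univ_nonempty (fun w : ∀ i, κ i => ∑ i, f i (w i)) =
      ∑ i, univ.inf' univ_nonempty (f i) := by
  apply le_antisymm
  · choose w _ hw using fun i => exists_mem_eq_inf' (univ_nonempty (α := κ i)) (f i)
    simpa only [hw] using inf'_le (fun w : ∀ i, κ i => ∑ i, f i (w i)) (mem_univ w)
  · exact le_inf' _ _ fun w _ => sum_le_sum fun i _ => inf'_le (f i) (mem_univ (w i))

theorem inf'_bool_sum_ite_eq_sum_min {ι M : Type*} [Fintype ι] [DecidableEq ι]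
    [AddCommMonoid M] [LinearOrder M] [IsOrderedAddMonoid M] (a : ι → M) :
    univ.inf' univ_nonempty (fun w : ι → Bool => ∑ i, if w i then a i else 0) =
      ∑ i, min 0 (a i) := by
  rw [inf'_pi_sum_eq_sum_inf' (fun i (b : Bool) => if b then a i else 0)]
  refine sum_congr rfl fun i _ => ?_
  simp [Fintype.univ_bool, min_comm]

theorem sum_sq_eq_sum_sq_add_two_mul_sum_lt {ι R : Type*} [Fintype ι] [LinearOrder ι]
    [CommSemiring R] (x : ι → R) :
    (∑ j, x j) ^ 2 =
      ∑ j, x j ^ 2 + 2 * ∑ p : ι × ι with p.1 < p.2, x p.1 * x p.2 := by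
  have hdiag : ∑ p : ι × ι with p.1 = p.2, x p.1 * x p.2 = ∑ j, x j ^ 2 := by
    simp [sum_filter, Fintype.sum_prod_type, sq]
  have hswap : ∑ p : ι × ι with p.2 < p.1, x p.1 * x p.2 =
      ∑ p : ι × ι with p.1 < p.2, x p.1 * x p.2 :=
    sum_equiv (Equiv.prodComm ι ι) (by simp) (by simp [mul_comm])
  have htrichotomy (p : ι × ι) : x p.1 * x p.2 =
      (if p.1 = p.2 then x p.1 * x p.2 else 0) + (if p.1 < p.2 then x p.1 * x p.2 else 0) +
        (if p.2 < p.1 then x p.1 * x p.2 else 0) := by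
    rcases lt_trichotomy p.1 p.2 with h | h | h
    · simp [h, h.ne, h.not_gt]
    · simp [h]
    · simp [h, h.ne', h.not_gt]
  calc (∑ j, x j) ^ 2 = ∑ p : ι × ι, x p.1 * x p.2 := by
        rw [sq, Fintype.sum_mul_sum, Fintype.sum_prod_type]
    _ = ∑ j, x j ^ 2 + 2 * ∑ p : ι × ι with p.1 < p.2, x p.1 * x p.2 := by
        rw [sum_congr rfl fun p _ => htrichotomy p, sum_add_distrib, sum_add_distrib,
          ← sum_filter, ← sum_filter, ← sum_filter, hdiag, hswap]
        ring

section OrderedRing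

variable {R : Type*} [CommRing R] [LinearOrder R] [IsStrictOrderedRing R]

theorem sum_min_zero_of_two_mul_le {n : ℕ} {k : R} (h : 2 * (n : R) ≤ k) :
    ∑ i ∈ range n, min 0 (4 * ((i : R) + 1) - 1 - 2 * k) = n * (2 * n + 1 - 2 * k) := by
  induction n with
  | zero => simp
  | succ n ih =>
    push_cast at h ⊢
    rw [sum_range_succ, ih (by linarith), min_eq_right (by linarith)]
    ring

theorem two_mul_sum_min_zero_of_le {n k : ℕ} (h : k ≤ 2 * n + 1) :
    2 * ∑ i ∈ range n, min 0 (4 * ((i : R) + 1) - 1 - 2 * k) = -(k * (k - 1)) := by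
  induction n with
  | zero => interval_cases k <;> simp
  | succ n ih =>
    rw [sum_range_succ]
    rcases le_or_gt k (2 * n + 1) with hk | hk
    · have hk' : (k : R) ≤ 2 * n + 1 := mod_cast hk
      rw [min_eq_left (by linarith), add_zero, ih hk]
    · have hk' : 2 * (n : R) + 2 ≤ k := mod_cast hk
      rw [min_eq_right, sum_min_zero_of_two_mul_le (by linarith)]
      · obtain rfl | rfl : k = 2 * n + 2 ∨ k = 2 * n + 3 := by lia
        all_goals push_cast; ring
      · linarith

theorem mul_sub_one_add_two_mul_sum_min_zero {n k : ℕ} (h : k ≤ 2 * (n + 1)) :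
    (k : R) * (k - 1) + 2 * ∑ i ∈ range n, min 0 (4 * ((i : R) + 1) - 1 - 2 * k) =
      if k = 2 * (n + 1) then 2 else 0 := by
  split_ifs with hk
  · rw [sum_min_zero_of_two_mul_le (mod_cast (by lia : 2 * n ≤ k)), hk]
    push_cast
    ring
  · rw [two_mul_sum_min_zero_of_le (by lia), add_neg_cancel]

theorem inf'_ishikawa_eq_sum_min_zero (n : ℕ) (s : R) :
    univ.inf' univ_nonempty
        (fun w : Fin n → Bool =>
          (∑ i : Fin n, (4 * ((i : ℕ) + 1 : R) - 1) * (if w i then (1 : R) else 0))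
            - 2 * (∑ i : Fin n, (if w i then (1 : R) else 0)) * s) =
      ∑ i ∈ range n, min 0 (4 * ((i : R) + 1) - 1 - 2 * s) := by
  rw [sum_range, ← inf'_bool_sum_ite_eq_sum_min]
  congr! 2 with w
  rw [mul_sum, sum_mul, ← sum_sub_distrib]
  refine sum_congr rfl fun i _ => ?_
  split_ifs <;> ring

theorem stmt_17_general {ι : Type*} [Fintype ι] [LinearOrder ι] (n : ℕ)
    (hι : Fintype.card ι = 2 * (n + 1)) (x : ι → R) (hx : ∀ j, x j = 0 ∨ x j = 1) :
    ∏ j, x j =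
      ∑ p : ι × ι with p.1 < p.2, x p.1 * x p.2
        + univ.inf' univ_nonempty
            (fun w : Fin n → Bool =>
              (∑ i : Fin n, (4 * ((i : ℕ) + 1 : R) - 1) * (if w i then (1 : R) else 0))
                - 2 * (∑ i : Fin n, (if w i then (1 : R) else 0)) * (∑ j, x j)) := by
  set k := #{j | x j = 1} with hk
  have hite (j : ι) : x j = if x j = 1 then 1 else 0 := by
    rcases hx j with h | h <;> simp [h]
  have hsum : ∑ j, x j = k := by
    rw [sum_congr rfl fun j _ => hite j, sum_boole]
  have hprod : ∏ j, x j = if k = 2 * (n + 1) then 1 else 0 := by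
    have hall : (∀ j ∈ univ, x j = 1) ↔ k = 2 * (n + 1) := by
      rw [hk, ← hι, card_eq_iff_eq_univ, filter_eq_self]
    rw [prod_congr rfl fun j _ => hite j, prod_boole]
    simp only [hall]
  have hpairs : (k : R) ^ 2 = k + 2 * ∑ p : ι × ι with p.1 < p.2, x p.1 * x p.2 := by
    have hsq (j : ι) : x j ^ 2 = x j := by rcases hx j with h | h <;> simp [h]
    simpa only [hsq, hsum] using sum_sq_eq_sum_sq_add_two_mul_sum_lt x
  have hmin := mul_sub_one_add_two_mul_sum_min_zero (R := R) (hι ▸ card_le_univ {j | x j = 1})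
  rw [inf'_ishikawa_eq_sum_min_zero, hsum, hprod]
  split_ifs at hmin ⊢ <;> linarith

end OrderedRing

theorem stmt_17 (d : ℕ) (hd : 2 ≤ d)
    (x : Fin (2 * d) → ℤ) (hx : ∀ j, x j = 0 ∨ x j = 1) :
    (∏ j, x j)
      = (∑ p ∈ Finset.univ.filter (fun p : Fin (2 * d) × Fin (2 * d) => p.1 < p.2),
          x p.1 * x p.2)
        + Finset.inf' Finset.univ Finset.univ_nonempty
            (fun w : Fin (d - 1) → Bool =>
              (∑ i : Fin (d - 1),
                  (4 * ((i : ℕ) + 1 : ℤ) - 1) * (if w i then (1 : ℤ) else 0))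
                - 2 * (∑ i : Fin (d - 1), (if w i then (1 : ℤ) else 0)) * (∑ j, x j)) := by
  exact stmt_17_general (d - 1) (by rw [Fintype.card_fin]; lia) x hx
end
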